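/- arXiv:2211.07736 — 2 statements merged into one kernel-verified Lean document; each statement's English description precedes it below -/
import Mathlib

section
/- Let X be a complex Banach space and T a bounded linear operator on X. Then T is almost invertible if and only if there exists an at most countable set σ̃ ⊆ σ(T) that is both closed and open in the subspace topology of σ(T) and satisfies 0 ∉ σ(T) \ σ̃. -/
open Ordinal Set

/-- The `α`-th Cantor–Bendixson derivative of a set `A ⊆ ℂ`, defined by transfinite
recursion: `cbd A 0 = A`, `cbd A (β+1) = derivedSet (cbd A β)` (the set of accumulation
points of `cbd A β`), and `cbd A α = ⋂_{β < α} cbd A β` for limit ordinals `α`. -/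
noncomputable def cbd (A : Set ℂ) (α : Ordinal) : Set ℂ :=
  Ordinal.limitRecOn α A (fun _ ih => derivedSet ih)
    (fun α _ ih => ⋂ (β : Set.Iio α), ih β.1 β.2)

variable {X : Type*} [NormedAddCommGroup X] [NormedSpace ℂ X] [CompleteSpace X]

/-- The restriction `T_M` of a bounded operator `T` to a `T`-invariant subspace `M`. -/
noncomputable def restr (T : X →L[ℂ] X) (M : Submodule ℂ X)
    (hM : ∀ x ∈ M, T x ∈ M) : M →L[ℂ] M :=
  { toLinearMap := T.toLinearMap.restrict hM
    cont := (T.continuous.comp continuous_subtype_val).subtype_mk _ }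


/-- `T` is almost invertible: there is `(M, N) ∈ Red T` (a pair of closed
`T`-invariant subspaces with `X = M ⊕ N`) such that `T_M` is invertible and
`σ(T_N)` is at most countable. -/
def AlmostInv (T : X →L[ℂ] X) : Prop :=
  ∃ (M N : Submodule ℂ X) (hM : ∀ x ∈ M, T x ∈ M) (hN : ∀ x ∈ N, T x ∈ N),
    IsClosed (M : Set X) ∧ IsClosed (N : Set X) ∧ IsCompl M N ∧
    IsUnit (restr T M hM) ∧ (spectrum ℂ (restr T N hN)).Countable

/-!
Almost invertibility of `T` says that `σ(T)` is countable near `0`. If it is, uncountably many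
small circles around `0` compete for countably many spectral values, so one of them misses `σ(T)`.
The Riesz projection `p` of that circle splits the space: `w - T` is inverted on `ker p` for `w`
inside the circle, and on `range p` for `w` outside, by a Cauchy integral of the resolvent. The
disc bounded by the same circle cuts out a countable clopen subset of `σ(T)`.
-/

open Filter Metric Topology
open scoped Real

section PseudoMetricSpace

variable {α : Type*} [PseudoMetricSpace α] {S U : Set α} {x : α} {r ε : ℝ}

theorem exists_disjoint_sphere_of_countable_inter_ball (hε : 0 < ε)
    (hS : (S ∩ ball x ε).Countable) : ∃ r ∈ Ioo 0 ε, Disjoint (sphere x r) S := by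
  by_contra! h
  have hsub : Ioo 0 ε ⊆ (dist · x) '' (S ∩ ball x ε) := by
    intro r hr
    obtain ⟨z, hzr, hzS⟩ := not_disjoint_iff.1 (h r hr)
    exact ⟨z, ⟨hzS, sphere_subset_ball hr.2 hzr⟩, hzr⟩
  exact (Cardinal.Real.Ioo_countable_iff.1 ((hS.image _).mono hsub)).not_gt hε

theorem isClopen_preimage_ball_of_disjoint_sphere (h : Disjoint (sphere x r) S) :
    IsClopen ((↑) ⁻¹' ball x r : Set S) := by
  have hball : ((↑) ⁻¹' ball x r : Set S) = (↑) ⁻¹' closedBall x r := by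
    have hsphere : ((↑) ⁻¹' sphere x r : Set S) = ∅ :=
      Subtype.preimage_coe_eq_empty.2 h.symm.inter_eq
    rw [← ball_union_sphere, preimage_union, hsphere, union_empty]
  exact ⟨hball ▸ isClosed_closedBall.preimage continuous_subtype_val,
    isOpen_ball.preimage continuous_subtype_val⟩

theorem exists_mem_nhds_countable_inter_iff_exists_isClopen (hS : IsClosed S) :
    (∃ U ∈ 𝓝 x, (S ∩ U).Countable) ↔
      ∃ s ⊆ S, s.Countable ∧ IsClopen ((↑) ⁻¹' s : Set S) ∧ x ∉ S \ s := by
  constructor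
  · rintro ⟨U, hU, hSU⟩
    obtain ⟨ε, hε, hεU⟩ := Metric.mem_nhds_iff.1 hU
    have hSε : (S ∩ ball x ε).Countable := hSU.mono (inter_subset_inter_right S hεU)
    obtain ⟨r, ⟨hr, hrε⟩, hdisj⟩ := exists_disjoint_sphere_of_countable_inter_ball hε hSε
    refine ⟨S ∩ ball x r, inter_subset_left,
      hSε.mono (inter_subset_inter_right S (ball_subset_ball hrε.le)), ?_,
      fun hx => hx.2 ⟨hx.1, mem_ball_self hr⟩⟩
    rw [Subtype.preimage_coe_self_inter]
    exact isClopen_preimage_ball_of_disjoint_sphere hdisj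
  · rintro ⟨s, hsS, hs, hclopen, hx⟩
    obtain ⟨V, hV, hVs⟩ := isOpen_induced_iff.1 hclopen.isOpen
    have hSV : S ∩ V = s := by
      rw [Subtype.preimage_coe_eq_preimage_coe_iff.1 hVs, inter_eq_right.2 hsS]
    refine ⟨V ∪ Sᶜ, (hV.union hS.isOpen_compl).mem_nhds ?_, ?_⟩
    · by_cases hxS : x ∈ S
      · exact Or.inl (hSV.superset (of_not_not fun hxs => hx ⟨hxS, hxs⟩)).2
      · exact Or.inr hxS
    · rwa [inter_union_distrib_left, inter_compl_self, union_empty, hSV]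

theorem exists_annulus_subset_of_sphere_subset (hU : IsCompact Uᶜ) (h : sphere x r ⊆ U) :
    ∃ R > r, closedBall x R \ ball x r ⊆ U := by
  have hclosed : IsClosed ((dist · x) '' Uᶜ) :=
    (hU.image (continuous_id.dist continuous_const)).isClosed
  have hr : r ∈ ((dist · x) '' Uᶜ)ᶜ := by
    rintro ⟨z, hzU, hzr⟩
    exact hzU (h hzr)
  obtain ⟨R, hR, hIcc⟩ := mem_nhdsGE_iff_exists_Icc_subset.1
    (mem_nhdsWithin_of_mem_nhds (hclosed.isOpen_compl.mem_nhds hr))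
  refine ⟨R, hR, fun z hz => ?_⟩
  by_contra hzU
  exact hIcc ⟨not_lt.1 hz.2, hz.1⟩ ⟨z, hzU, rfl⟩

end PseudoMetricSpace

section CircleIntegral

variable {E : Type*} [NormedAddCommGroup E] [NormedSpace ℂ E] {f : ℂ → E} {c w : ℂ} {r : ℝ}

theorem circleIntegral_clm_comp_comm {F : Type*} [CompleteSpace E] [NormedAddCommGroup F]
    [NormedSpace ℂ F] [CompleteSpace F] (L : E →L[ℂ] F) (hf : CircleIntegrable f c r) :
    ∮ z in C(c, r), L (f z) = L (∮ z in C(c, r), f z) := by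
  simp only [circleIntegral, ← map_smul]
  exact L.intervalIntegral_comp_comm hf.out

theorem continuousOn_sub_inv_sphere (hw : w ∉ sphere c r) :
    ContinuousOn (fun z => (z - w)⁻¹) (sphere c r) :=
  (continuousOn_id.sub continuousOn_const).inv₀ fun _ hz =>
    sub_ne_zero.2 (ne_of_mem_of_not_mem hz hw)

theorem circleIntegral_sub_inv_of_notMem_closedBall (hr : 0 ≤ r) (hw : w ∉ closedBall c r) :
    ∮ z in C(c, r), (z - w)⁻¹ = 0 := by
  have hdiff : DifferentiableOn ℂ (fun z => (z - w)⁻¹) {w}ᶜ :=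
    (differentiableOn_id.sub_const w).inv fun z hz => sub_ne_zero.2 hz
  exact (hdiff.diffContOnCl_ball (subset_compl_singleton_iff.2 hw)).circleIntegral_eq_zero hr

theorem differentiableOn_cauchyIntegral [CompleteSpace E] (hf : CircleIntegrable f c r) :
    DifferentiableOn ℂ (fun w => (2 * π * Complex.I)⁻¹ • ∮ z in C(c, r), (z - w)⁻¹ • f z)
      (ball c r) := by
  rcases le_or_gt r 0 with hr | hr
  · rw [ball_eq_empty.2 hr]
    exact differentiableOn_empty
  · lift r to NNReal using hr.le
    simpa using (hasFPowerSeriesOn_cauchy_integral hf (by exact_mod_cast hr)).differentiableOn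

variable {A : Type*} [NormedRing A] [NormedAlgebra ℂ A] [CompleteSpace A] {g : ℂ → A}

theorem circleIntegral_const_mul (b : A) (hg : CircleIntegrable g c r) :
    ∮ z in C(c, r), b * g z = b * ∮ z in C(c, r), g z :=
  circleIntegral_clm_comp_comm (ContinuousLinearMap.mul ℂ A b) hg

theorem circleIntegral_mul_const (b : A) (hg : CircleIntegrable g c r) :
    ∮ z in C(c, r), g z * b = (∮ z in C(c, r), g z) * b :=
  circleIntegral_clm_comp_comm ((ContinuousLinearMap.mul ℂ A).flip b) hg

theorem commute_circleIntegral {b : A} (hr : 0 ≤ r) (hg : CircleIntegrable g c r)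
    (hb : ∀ z ∈ sphere c r, Commute b (g z)) : Commute b (∮ z in C(c, r), g z) := by
  rw [Commute, SemiconjBy, ← circleIntegral_const_mul b hg, ← circleIntegral_mul_const b hg]
  exact circleIntegral.integral_congr hr hb

end CircleIntegral

section RieszProjection

/-- The Riesz projection of `a` for the part of its spectrum inside the circle of centre `c` and
radius `r`. Only meaningful if the circle does not meet the spectrum: `resolvent a` takes the junk
value `0` there. -/
noncomputable def rieszProjection {A : Type*} [NormedRing A] [NormedAlgebra ℂ A]
    (a : A) (c : ℂ) (r : ℝ) : A :=
  (2 * π * Complex.I)⁻¹ • ∮ z in C(c, r), resolvent a z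

/-- The Cauchy integral at `w` of the resolvent of `a` over the circle of centre `c` and radius
`r`. Up to sign, it inverts `w - a` on the kernel of the Riesz projection if `w` lies inside the
circle, and on its range if `w` lies outside. -/
noncomputable def resolventCauchyIntegral {A : Type*} [NormedRing A] [NormedAlgebra ℂ A]
    (a : A) (c : ℂ) (r : ℝ) (w : ℂ) : A :=
  (2 * π * Complex.I)⁻¹ • ∮ z in C(c, r), (z - w)⁻¹ • resolvent a z

variable {A : Type*} [NormedRing A] [NormedAlgebra ℂ A] {a b : A} {c w z : ℂ} {r R : ℝ}

theorem commute_resolvent (hz : z ∈ resolventSet ℂ a) (hb : Commute b a) :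
    Commute b (resolvent a z) := by
  rw [spectrum.resolvent_eq hz]
  exact ((Algebra.commute_algebraMap_right z b).sub_right hb).units_inv_right

theorem algebraMap_sub_mul_resolvent (hz : z ∈ resolventSet ℂ a) :
    (algebraMap ℂ A w - a) * resolvent a z = 1 - (z - w) • resolvent a z := by
  have hsplit : algebraMap ℂ A w - a = (algebraMap ℂ A z - a) - (z - w) • (1 : A) := by
    rw [Algebra.algebraMap_eq_smul_one, Algebra.algebraMap_eq_smul_one]
    module
  rw [hsplit, sub_mul, smul_one_mul, resolvent, Ring.mul_inverse_cancel _ hz]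

variable [CompleteSpace A]

theorem differentiableOn_resolvent (a : A) : DifferentiableOn ℂ (resolvent a) (resolventSet ℂ a) :=
  fun _ hz =>
    (spectrum.hasDerivAt_resolvent_const_left hz).differentiableAt.differentiableWithinAt

theorem circleIntegrable_resolvent (hr : 0 ≤ r) (h : sphere c r ⊆ resolventSet ℂ a) :
    CircleIntegrable (resolvent a) c r :=
  ((differentiableOn_resolvent a).continuousOn.mono h).circleIntegrable hr

theorem circleIntegrable_sub_inv_smul_resolvent (hr : 0 ≤ r) (h : sphere c r ⊆ resolventSet ℂ a)
    (hw : w ∉ sphere c r) : CircleIntegrable (fun z => (z - w)⁻¹ • resolvent a z) c r :=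
  ((continuousOn_sub_inv_sphere hw).smul
    ((differentiableOn_resolvent a).continuousOn.mono h)).circleIntegrable hr

theorem commute_rieszProjection (hr : 0 ≤ r) (h : sphere c r ⊆ resolventSet ℂ a)
    (hb : Commute b a) : Commute b (rieszProjection a c r) :=
  (commute_circleIntegral hr (circleIntegrable_resolvent hr h) fun _ hz =>
    commute_resolvent (h hz) hb).smul_right _

theorem commute_resolventCauchyIntegral (hr : 0 ≤ r) (h : sphere c r ⊆ resolventSet ℂ a)
    (hw : w ∉ sphere c r) (hb : Commute b a) : Commute b (resolventCauchyIntegral a c r w) :=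
  (commute_circleIntegral hr (circleIntegrable_sub_inv_smul_resolvent hr h hw) fun _ hz =>
    (commute_resolvent (h hz) hb).smul_right _).smul_right _

theorem algebraMap_sub_mul_resolventCauchyIntegral (hr : 0 ≤ r)
    (h : sphere c r ⊆ resolventSet ℂ a) (hw : w ∉ sphere c r) :
    (algebraMap ℂ A w - a) * resolventCauchyIntegral a c r w =
      ((2 * π * Complex.I)⁻¹ * ∮ z in C(c, r), (z - w)⁻¹) • 1 - rieszProjection a c r := by
  have hpointwise : EqOn (fun z => (algebraMap ℂ A w - a) * ((z - w)⁻¹ • resolvent a z))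
      (fun z => (z - w)⁻¹ • 1 - resolvent a z) (sphere c r) := by
    intro z hz
    have hzw : z - w ≠ 0 := sub_ne_zero.2 (ne_of_mem_of_not_mem hz hw)
    simp only [mul_smul_comm, algebraMap_sub_mul_resolvent (h hz), smul_sub, inv_smul_smul₀ hzw]
  have hkernel : CircleIntegrable (fun z => (z - w)⁻¹ • (1 : A)) c r :=
    ((continuousOn_sub_inv_sphere hw).smul continuousOn_const).circleIntegrable hr
  rw [resolventCauchyIntegral, mul_smul_comm,
    ← circleIntegral_const_mul _ (circleIntegrable_sub_inv_smul_resolvent hr h hw),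
    circleIntegral.integral_congr hr hpointwise,
    circleIntegral.integral_sub hkernel (circleIntegrable_resolvent hr h),
    circleIntegral.integral_smul_const, smul_sub, smul_smul, rieszProjection]

theorem algebraMap_sub_mul_resolventCauchyIntegral_of_mem_ball
    (h : sphere c r ⊆ resolventSet ℂ a) (hw : w ∈ ball c r) :
    (algebraMap ℂ A w - a) * resolventCauchyIntegral a c r w = 1 - rieszProjection a c r := by
  rw [algebraMap_sub_mul_resolventCauchyIntegral (pos_of_mem_ball hw).le h
    (ne_of_lt hw), circleIntegral.integral_sub_inv_of_mem_ball hw,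
    inv_mul_cancel₀ Complex.two_pi_I_ne_zero, one_smul]

theorem algebraMap_sub_mul_resolventCauchyIntegral_of_notMem_closedBall (hr : 0 ≤ r)
    (h : sphere c r ⊆ resolventSet ℂ a) (hw : w ∉ closedBall c r) :
    (algebraMap ℂ A w - a) * resolventCauchyIntegral a c r w = -rieszProjection a c r := by
  rw [algebraMap_sub_mul_resolventCauchyIntegral hr h (notMem_subset sphere_subset_closedBall hw),
    circleIntegral_sub_inv_of_notMem_closedBall hr hw, mul_zero, zero_smul, _root_.zero_sub]

theorem rieszProjection_eq_of_annulus_subset (hr : 0 < r) (hrR : r ≤ R)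
    (h : closedBall c R \ ball c r ⊆ resolventSet ℂ a) :
    rieszProjection a c R = rieszProjection a c r := by
  have hdiff := differentiableOn_resolvent a
  rw [rieszProjection, rieszProjection,
    Complex.circleIntegral_eq_of_differentiable_on_annulus_off_countable hr hrR countable_empty
      (hdiff.continuousOn.mono h)]
  intro z hz
  exact hdiff.differentiableAt ((spectrum.isOpen_resolventSet a).mem_nhds
    (h (sdiff_subset_sdiff ball_subset_closedBall ball_subset_closedBall hz.1)))

-- On the smaller circle, `resolvent a w * (1 - rieszProjection a c R)` agrees with the Cauchy
-- integral over the larger one, which is holomorphic inside; so its integral vanishes.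
theorem rieszProjection_mul_rieszProjection_of_lt (hr : 0 ≤ r) (hrR : r < R)
    (hsr : sphere c r ⊆ resolventSet ℂ a) (hsR : sphere c R ⊆ resolventSet ℂ a) :
    rieszProjection a c r * rieszProjection a c R = rieszProjection a c r := by
  have hholo : DifferentiableOn ℂ (resolventCauchyIntegral a c R) (ball c R) :=
    differentiableOn_cauchyIntegral (circleIntegrable_resolvent (hr.trans hrR.le) hsR)
  have hpointwise : EqOn (fun w => resolvent a w * (1 - rieszProjection a c R))
      (resolventCauchyIntegral a c R) (sphere c r) := by
    intro w hw
    simp only [← algebraMap_sub_mul_resolventCauchyIntegral_of_mem_ball hsR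
      (sphere_subset_ball hrR hw), resolvent]
    exact Ring.inverse_mul_cancel_left _ _ (hsr hw)
  have hzero : rieszProjection a c r * (1 - rieszProjection a c R) = 0 := by
    rw [rieszProjection, smul_mul_assoc,
      ← circleIntegral_mul_const _ (circleIntegrable_resolvent hr hsr),
      circleIntegral.integral_congr hr hpointwise,
      (hholo.diffContOnCl_ball (closedBall_subset_ball hrR)).circleIntegral_eq_zero hr, smul_zero]
  rw [_root_.mul_sub, mul_one, sub_eq_zero] at hzero
  exact hzero.symm

theorem isIdempotentElem_rieszProjection (hr : 0 < r) (h : sphere c r ⊆ resolventSet ℂ a) :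
    IsIdempotentElem (rieszProjection a c r) := by
  obtain ⟨R, hrR, hannulus⟩ := exists_annulus_subset_of_sphere_subset (spectrum.isCompact a) h
  have hsR : sphere c R ⊆ resolventSet ℂ a := fun z hz =>
    hannulus ⟨sphere_subset_closedBall hz, fun hzr => (hrR.trans_eq hz.symm).not_gt hzr⟩
  have hmul := rieszProjection_mul_rieszProjection_of_lt hr.le hrR h hsR
  rwa [rieszProjection_eq_of_annulus_subset hr hrR.le hannulus] at hmul

end RieszProjection

section Restriction

theorem bijective_iff_restrict_of_isCompl {R V : Type*} [Ring R] [AddCommGroup V] [Module R V]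
    {f : V →ₗ[R] V} {p q : Submodule R V} (hpq : IsCompl p q) (hp : ∀ x ∈ p, f x ∈ p)
    (hq : ∀ x ∈ q, f x ∈ q) :
    Function.Bijective f ↔
      Function.Bijective (f.restrict hp) ∧ Function.Bijective (f.restrict hq) := by
  have hconj : f ∘ p.prodEquivOfIsCompl q hpq =
      p.prodEquivOfIsCompl q hpq ∘ Prod.map (f.restrict hp) (f.restrict hq) := by
    ext x
    simp
  rw [← Prod.map_bijective, ← (p.prodEquivOfIsCompl q hpq).bijective.of_comp_iff', ← hconj,
    Function.Bijective.of_comp_iff _ (p.prodEquivOfIsCompl q hpq).bijective]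

theorem spectrum_eq_union_restrict_of_isCompl {R V : Type*} [CommRing R] [AddCommGroup V]
    [Module R V] {f : Module.End R V} {p q : Submodule R V} (hpq : IsCompl p q)
    (hp : ∀ x ∈ p, f x ∈ p) (hq : ∀ x ∈ q, f x ∈ q) :
    spectrum R f = spectrum R (f.restrict hp : Module.End R p) ∪
      spectrum R (f.restrict hq : Module.End R q) := by
  ext w
  have hsub {K : Submodule R V} (hK : ∀ x ∈ K, f x ∈ K) :
      ∀ x ∈ K, (algebraMap R (Module.End R V) w - f) x ∈ K :=
    fun x hx => K.sub_mem (K.smul_mem w hx) (hK x hx)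
  have hbij := bijective_iff_restrict_of_isCompl hpq (hsub hp) (hsub hq)
  simp only [← Module.End.isUnit_iff] at hbij
  rw [mem_union, spectrum.mem_iff, spectrum.mem_iff, spectrum.mem_iff, ← not_and_or]
  exact not_congr hbij

variable {E : Type*} [NormedAddCommGroup E] [NormedSpace ℂ E] {T S : E →L[ℂ] E}

theorem spectrum_eq_union_restr_of_isCompl [CompleteSpace E] {M N : Submodule ℂ E}
    (hMclosed : IsClosed (M : Set E)) (hNclosed : IsClosed (N : Set E)) (hMN : IsCompl M N)
    (hM : ∀ x ∈ M, T x ∈ M) (hN : ∀ x ∈ N, T x ∈ N) :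
    spectrum ℂ T = spectrum ℂ (restr T M hM) ∪ spectrum ℂ (restr T N hN) := by
  have := hMclosed.completeSpace_coe
  have := hNclosed.completeSpace_coe
  simp only [ContinuousLinearMap.spectrum_eq]
  exact spectrum_eq_union_restrict_of_isCompl hMN hM hN

theorem notMem_spectrum_restr_of_commute {K : Submodule ℂ E} {w : ℂ} (hT : ∀ x ∈ K, T x ∈ K)
    (hS : ∀ x ∈ K, S x ∈ K) (hTS : Commute T S)
    (hright : ∀ x ∈ K, ((algebraMap ℂ (E →L[ℂ] E) w - T) * S) x = x) :
    w ∉ spectrum ℂ (restr T K hT) := by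
  have hcomm : Commute (algebraMap ℂ (E →L[ℂ] E) w - T) S :=
    (Algebra.commute_algebraMap_left w S).sub_left hTS
  refine not_not.2 (spectrum.mem_resolventSet_of_left_right_inverse
    (b := restr S K hS) (c := restr S K hS) ?_ ?_)
  · ext x
    exact hright x x.2
  · ext x
    exact (DFunLike.congr_fun hcomm.eq (x : E)).symm.trans (hright x x.2)

end Restriction

section RieszDecomposition

variable {E : Type*} [NormedAddCommGroup E] [NormedSpace ℂ E] [CompleteSpace E] {T : E →L[ℂ] E}
  {c w : ℂ} {r : ℝ}

theorem commute_rieszProjection_resolventCauchyIntegral (hr : 0 ≤ r)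
    (h : sphere c r ⊆ resolventSet ℂ T) (hw : w ∉ sphere c r) :
    Commute (rieszProjection T c r) (resolventCauchyIntegral T c r w) :=
  commute_resolventCauchyIntegral hr h hw (commute_rieszProjection hr h (Commute.refl T)).symm

theorem notMem_spectrum_restr_ker_rieszProjection (h : sphere c r ⊆ resolventSet ℂ T)
    (hT : ∀ x ∈ (rieszProjection T c r).ker, T x ∈ (rieszProjection T c r).ker)
    (hw : w ∈ ball c r) : w ∉ spectrum ℂ (restr T (rieszProjection T c r).ker hT) := by
  have hr : 0 < r := pos_of_mem_ball hw
  have hws : w ∉ sphere c r := ne_of_lt hw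
  have hpS := commute_rieszProjection_resolventCauchyIntegral hr.le h hws
  refine notMem_spectrum_restr_of_commute hT
    ((ContinuousLinearMap.IsIdempotentElem.commute_iff
      (isIdempotentElem_rieszProjection hr h)).1 hpS).2
    (commute_resolventCauchyIntegral hr.le h hws (Commute.refl T)) fun x hx => ?_
  have hpx : rieszProjection T c r x = 0 := hx
  rw [algebraMap_sub_mul_resolventCauchyIntegral_of_mem_ball h hw, sub_apply, hpx, _root_.sub_zero,
    one_apply_eq_self]

theorem notMem_spectrum_restr_range_rieszProjection (hr : 0 < r)
    (h : sphere c r ⊆ resolventSet ℂ T)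
    (hT : ∀ x ∈ (rieszProjection T c r).range, T x ∈ (rieszProjection T c r).range)
    (hw : w ∉ closedBall c r) : w ∉ spectrum ℂ (restr T (rieszProjection T c r).range hT) := by
  have hws : w ∉ sphere c r := notMem_subset sphere_subset_closedBall hw
  have hp := isIdempotentElem_rieszProjection hr h
  have hpS := (commute_rieszProjection_resolventCauchyIntegral hr.le h hws).neg_right
  refine notMem_spectrum_restr_of_commute hT
    ((ContinuousLinearMap.IsIdempotentElem.commute_iff hp).1 hpS).1
    (commute_resolventCauchyIntegral hr.le h hws (Commute.refl T)).neg_right ?_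
  rintro _ ⟨x, rfl⟩
  rw [mul_neg, algebraMap_sub_mul_resolventCauchyIntegral_of_notMem_closedBall hr.le h hw, neg_neg]
  exact DFunLike.congr_fun hp.eq x

theorem exists_isCompl_spectrum_restr_eq (hr : 0 < r) (h : sphere c r ⊆ resolventSet ℂ T) :
    ∃ (M N : Submodule ℂ E) (hM : ∀ x ∈ M, T x ∈ M) (hN : ∀ x ∈ N, T x ∈ N),
      IsClosed (M : Set E) ∧ IsClosed (N : Set E) ∧ IsCompl M N ∧
      spectrum ℂ (restr T M hM) = spectrum ℂ T \ ball c r ∧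
      spectrum ℂ (restr T N hN) = spectrum ℂ T ∩ ball c r := by
  have hp := isIdempotentElem_rieszProjection hr h
  obtain ⟨hN, hM⟩ := (ContinuousLinearMap.IsIdempotentElem.commute_iff hp).1
    (commute_rieszProjection hr.le h (Commute.refl T)).symm
  have hMclosed := (rieszProjection T c r).isClosed_ker
  have hNclosed := ContinuousLinearMap.IsIdempotentElem.isClosed_range hp
  have hMN : IsCompl (rieszProjection T c r).ker (rieszProjection T c r).range :=
    (LinearMap.IsIdempotentElem.isCompl
      (ContinuousLinearMap.IsIdempotentElem.toLinearMap hp)).symm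
  have hunion := spectrum_eq_union_restr_of_isCompl hMclosed hNclosed hMN hM hN
  have hMball : Disjoint (spectrum ℂ (restr T _ hM)) (ball c r) :=
    disjoint_right.2 fun w hw => notMem_spectrum_restr_ker_rieszProjection h hM hw
  have hNball : spectrum ℂ (restr T _ hN) ⊆ ball c r := by
    intro w hw
    have hwclosed : w ∈ closedBall c r :=
      of_not_not fun hwr => notMem_spectrum_restr_range_rieszProjection hr h hN hwr hw
    rw [← ball_union_sphere] at hwclosed
    exact hwclosed.resolve_right fun hws => (hunion ▸ Or.inr hw : w ∈ spectrum ℂ T) (h hws)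
  refine ⟨_, _, hM, hN, hMclosed, hNclosed, hMN, ?_, ?_⟩
  · rw [hunion, union_sdiff_distrib, hMball.sdiff_eq_left, sdiff_eq_empty.2 hNball, union_empty]
  · rw [hunion, union_inter_distrib_right, hMball.inter_eq, empty_union, inter_eq_left.2 hNball]

theorem almostInv_iff_exists_mem_nhds_countable_inter :
    AlmostInv T ↔ ∃ U ∈ 𝓝 (0 : ℂ), (spectrum ℂ T ∩ U).Countable := by
  constructor
  · rintro ⟨M, N, hM, hN, hMclosed, hNclosed, hMN, hinv, hcount⟩
    have := hMclosed.completeSpace_coe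
    have hzero : 0 ∉ spectrum ℂ (restr T M hM) := (spectrum.zero_notMem_iff ℂ).2 hinv
    refine ⟨(spectrum ℂ (restr T M hM))ᶜ,
      (spectrum.isClosed (𝕜 := ℂ) (restr T M hM)).isOpen_compl.mem_nhds hzero, hcount.mono ?_⟩
    rw [spectrum_eq_union_restr_of_isCompl hMclosed hNclosed hMN hM hN]
    rintro w ⟨hw, hwM⟩
    exact hw.resolve_left hwM
  · rintro ⟨U, hU, hcount⟩
    obtain ⟨ε, hε, hεU⟩ := Metric.mem_nhds_iff.1 hU
    obtain ⟨r, ⟨hr, hrε⟩, hdisj⟩ := exists_disjoint_sphere_of_countable_inter_ball hε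
      (hcount.mono (inter_subset_inter_right _ hεU))
    obtain ⟨M, N, hM, hN, hMclosed, hNclosed, hMN, hspecM, hspecN⟩ :=
      exists_isCompl_spectrum_restr_eq hr (disjoint_compl_right_iff_subset.1 hdisj)
    refine ⟨M, N, hM, hN, hMclosed, hNclosed, hMN, ?_, ?_⟩
    · rw [← spectrum.zero_notMem_iff ℂ, hspecM]
      exact fun h0 => h0.2 (mem_ball_self hr)
    · rw [hspecN]
      exact hcount.mono (inter_subset_inter_right _ ((ball_subset_ball hrε.le).trans hεU))

end RieszDecomposition

/-- `T` is almost invertible iff there is an at most countable spectral set `σ̃` of `T`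
(a subset of `σ(T)` clopen in the subspace topology of `σ(T)`) with `0 ∉ σ(T) \ σ̃`. -/
theorem almostInv_iff_exists_countable_spectralSet (T : X →L[ℂ] X) :
    AlmostInv T ↔
      ∃ s : Set ℂ, s ⊆ spectrum ℂ T ∧ s.Countable ∧
        IsClopen (Subtype.val ⁻¹' s : Set (spectrum ℂ T)) ∧
        (0 : ℂ) ∉ spectrum ℂ T \ s :=
  almostInv_iff_exists_mem_nhds_countable_inter.trans
    (exists_mem_nhds_countable_inter_iff_exists_isClopen (spectrum.isClosed T))
end

section
/- Let A be a compact subset of ℂ. Then A is at most countable if and only if acc^{ω₁} A = ∅, where ω₁ is the first uncountable ordinal. -/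
open Ordinal Set

/-!
The Cantor–Bendixson derivatives of a closed set form a decreasing family of closed sets. In a
hereditarily Lindelöf space the intersection of the stages below `ω₁` is already that of countably
many of them, so the family is stationary from some countable stage on, and the `ω₁`-th derivative
is the perfect kernel. In a Polish space a nonempty perfect set contains a copy of the Cantor
space, while an uncountable closed set contains a nonempty perfect subset; hence the perfect kernel
of a closed set is empty exactly when the set is countable.
-/

universe u

section Stationarity

open CantorBendixson Function

variable {X : Type u} [TopologicalSpace X] [HereditarilyLindelofSpace X]

lemma exists_lt_omega_one_forall_subset_of_antitone {C : Ordinal → Set X} (hC : Antitone C)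
    (hclosed : ∀ a, IsClosed (C a)) : ∃ b < ω₁, ∀ a < ω₁, C b ⊆ C a := by
  have : Nonempty (Iio (ω₁ : Ordinal)) := ⟨0, omega_pos 1⟩
  obtain ⟨k, hk⟩ := eq_closed_inter_nat (fun a : Iio ω₁ ↦ C a) fun a ↦ hclosed a
  refine ⟨⨆ n, (k n : Ordinal), iSup_lt_omega_one fun n ↦ (k n).2, fun a ha ↦ ?_⟩
  calc C (⨆ n, (k n : Ordinal)) ⊆ ⋂ n, C (k n) :=
        subset_iInter fun n ↦ hC (Ordinal.le_iSup (fun n ↦ (k n : Ordinal)) n)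
    _ = ⋂ a : Iio ω₁, C a := hk
    _ ⊆ C a := iInter_subset (fun a : Iio ω₁ ↦ C a) ⟨a, ha⟩

lemma exists_lt_omega_one_iteratedDerivedSet_mem_fixedPoints {s : Set X} (hs : IsClosed s) :
    ∃ b < ω₁, iteratedDerivedSet s b ∈ fixedPoints relDerivedSet := by
  obtain ⟨b, hb, hsub⟩ := exists_lt_omega_one_forall_subset_of_antitone
    (iteratedDerivedSet_antitone s) (isClosed_iteratedDerivedSet hs)
  have hb_succ : b + 1 < ω₁ := (Cardinal.isSuccLimit_omega 1).add_one_lt hb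
  exact ⟨b, hb, mem_fixedPoints_of_iteratedDerivedSet_succ_eq <|
    (iteratedDerivedSet_antitone s le_self_add).antisymm (hsub _ hb_succ)⟩

lemma iteratedDerivedSet_omega_one_eq_perfectKernel {s : Set X} (hs : IsClosed s) :
    iteratedDerivedSet s ω₁ = perfectKernel s := by
  obtain ⟨b, hb, hfix⟩ := exists_lt_omega_one_iteratedDerivedSet_mem_fixedPoints hs
  refine Subset.antisymm ?_ (perfectKernel_subset_iteratedDerivedSet s ω₁)
  rw [perfectKernel_eq_iteratedDerivedSet_of_mem_fixedPoints hfix]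
  exact iteratedDerivedSet_antitone s hb.le

end Stationarity

section PerfectKernel

open CantorBendixson

variable {X : Type u} [TopologicalSpace X]

lemma not_countable_of_perfect [TopologicalSpace.IsCompletelyMetrizableSpace X] {C : Set X}
    (hC : Perfect C) (hne : C.Nonempty) : ¬C.Countable := by
  let := TopologicalSpace.upgradeIsCompletelyMetrizable X
  obtain ⟨f, hfC, -, hf⟩ := hC.exists_nat_bool_injection hne
  have : Uncountable (ℕ → Bool) :=
    Cardinal.aleph0_lt_mk_iff.1 (by simpa using Cardinal.aleph0_lt_continuum)
  intro hcount
  have : Countable (range f) := (hcount.mono hfC).to_subtype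
  exact not_countable (rangeFactorization_injective.2 hf).countable

lemma perfectKernel_eq_empty_iff_countable [PolishSpace X] {s : Set X} (hs : IsClosed s) :
    perfectKernel s = ∅ ↔ s.Countable := by
  constructor
  · intro hker
    by_contra hunc
    obtain ⟨P, hP, hne, hPs⟩ := exists_perfect_nonempty_of_isClosed_of_not_countable hs hunc
    exact (hne.mono (hP.subset_perfectKernel hPs)).ne_empty hker
  · intro hcount
    by_contra hker
    exact not_countable_of_perfect (perfect_perfectKernel hs) (nonempty_iff_ne_empty.2 hker)
      (hcount.mono (perfectKernel_subset s))

theorem countable_iff_cbd_omega1_empty_general [PolishSpace X] {s : Set X} (hs : IsClosed s) :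
    s.Countable ↔ iteratedDerivedSet s ω₁ = ∅ := by
  rw [iteratedDerivedSet_omega_one_eq_perfectKernel hs, perfectKernel_eq_empty_iff_countable hs]

end PerfectKernel

section ComplexPlane

open CantorBendixson

lemma cbd_zero (A : Set ℂ) : cbd A (0 : Ordinal.{u}) = A :=
  limitRecOn_zero ..

lemma cbd_add_one (A : Set ℂ) (a : Ordinal.{u}) : cbd A (a + 1) = derivedSet (cbd A a) :=
  limitRecOn_add_one ..

lemma cbd_of_isSuccLimit (A : Set ℂ) {a : Ordinal.{u}} (ha : Order.IsSuccLimit a) :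
    cbd A a = ⋂ b : Iio a, cbd A b :=
  limitRecOn_limit _ _ _ _ ha

/- Mathlib's derivatives of a subset of `ℂ : Type` are indexed by `Ordinal.{0}`, whereas `cbd`
accepts ordinals of any universe. -/
lemma cbd_lift {A : Set ℂ} (hA : IsClosed A) (a : Ordinal.{0}) :
    cbd A (lift.{u} a) = iteratedDerivedSet A a := by
  induction a using Ordinal.limitRecOn with
  | zero => rw [lift_zero, cbd_zero, iteratedDerivedSet_zero]
  | add_one a ih =>
    rw [lift_add_one, cbd_add_one, ih, iteratedDerivedSet_succ,
      (isClosed_iteratedDerivedSet hA a).relDerivedSet_eq]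
  | limit a ha ih =>
    rw [cbd_of_isSuccLimit A (isSuccLimit_lift.2 ha), iteratedDerivedSet_limit ha]
    apply Subset.antisymm
    · refine subset_iInter fun b ↦ ?_
      rw [← ih b b.2]
      exact iInter_subset (fun c : Iio (lift.{u} a) ↦ cbd A c) ⟨lift.{u} b, lift_lt.2 b.2⟩
    · intro x hx
      refine mem_iInter.2 fun ⟨c, hc⟩ ↦ ?_
      obtain ⟨b, hb, rfl⟩ := lt_lift_iff.1 hc
      exact (ih b hb).ge (mem_iInter.1 hx ⟨b, hb⟩)

lemma cbd_omega_one {A : Set ℂ} (hA : IsClosed A) :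
    cbd A (ω₁ : Ordinal.{u}) = iteratedDerivedSet A ω₁ := by
  rw [← cbd_lift hA, lift_omega, lift_one]

end ComplexPlane

/-- A compact subset of `ℂ` is at most countable iff its `ω₁`-th Cantor–Bendixson
derivative is empty. -/
theorem countable_iff_cbd_omega1_empty (A : Set ℂ) (hA : IsCompact A) :
    A.Countable ↔ cbd A ω₁ = ∅ := by
  rw [cbd_omega_one hA.isClosed, countable_iff_cbd_omega1_empty_general hA.isClosed]
end
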